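/- Let $n\ge 1$ and let $l_1,\dots,l_n$ be even positive integers. Let $G$ be a complex function that is holomorphic on an open set containing the strip $|\mathrm{Re}(u)|\le 3/2$, bounded on this strip, and satisfies $G(u)=G(-u)$ there and $G(0)=1$. For even positive integers $k_1,\dots,k_n$ put $$\gamma(u)=\prod_{j=1}^n\frac{\Gamma\left(\frac12+u+\frac{|k_j-l_j|}2\right)\Gamma\left(u-\frac12+\frac{k_j+l_j}2\right)}{\Gamma\left(\frac12+\frac{|k_j-l_j|}2\right)\Gamma\left(\frac{k_j+l_j}2-\frac12\right)},\qquad V(y)=\frac1{2\pi i}\int_{\mathrm{Re}(u)=3/2}y^{-u}\,\gamma(u)\,G(u)\,\frac{du}u\quad(y>0).$$ Let $a\ge 0$ be an integer and $\alpha\in(0,1/2)$, and put $\delta_0=1$ and $\delta_a=0$ for $a>0$. (i) For all even positive integers $k_1,\dots,k_n$ the integral defining $V(y)$ converges absolutely for every $y>0$, the function $V$ is infinitely differentiable on $(0,\infty)$, and there is a constant $C>0$, depending only on $a$, $\alpha$, $n$, $G$ and the weights $k_j,l_j$, such that for all $y>0$ $$\left|y^aV^{(a)}(y)-\delta_a\right|\le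 C\left(\frac{y}{\prod_{j=1}^nk_j^2}\right)^{\alpha}.$$ (ii) If moreover $(1+|u|)^{a+1}|G(u)|$ is bounded on the strip $|\mathrm{Re}(u)|\le 3/2$, then the constant $C$ in (i) can be chosen independently of $k_1,\dots,k_n$. -/

import Mathlib

/-- The archimedean factor `γ(u) = γ(1/2, u)` of the Rankin–Selberg convolution of weights `k`
and `l`:
`γ(u) = ∏_{j=1}^n [Γ(1/2 + u + |kⱼ-lⱼ|/2) Γ(u - 1/2 + (kⱼ+lⱼ)/2)]
        / [Γ(1/2 + |kⱼ-lⱼ|/2) Γ((kⱼ+lⱼ)/2 - 1/2)]`. -/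
noncomputable def rankinSelbergGamma (n : ℕ) (k l : Fin n → ℕ) (u : ℂ) : ℂ :=
  ∏ j : Fin n,
    (Complex.Gamma (1 / 2 + u + ((|(k j : ℤ) - (l j : ℤ)| : ℤ) : ℂ) / 2) *
        Complex.Gamma (u - 1 / 2 + ((k j : ℂ) + (l j : ℂ)) / 2)) /
      (Complex.Gamma (1 / 2 + ((|(k j : ℤ) - (l j : ℤ)| : ℤ) : ℂ) / 2) *
        Complex.Gamma (((k j : ℂ) + (l j : ℂ)) / 2 - 1 / 2))

/-- The admissible test functions `G`: holomorphic on an open set containing the closed strip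
`|Re u| ≤ 3/2`, bounded on the strip, even, and normalized by `G(0) = 1`. -/
structure IsAdmissibleTestFunction (G : ℂ → ℂ) : Prop where
  holomorphic : ∃ U : Set ℂ, IsOpen U ∧ {u : ℂ | |u.re| ≤ 3 / 2} ⊆ U ∧ DifferentiableOn ℂ G U
  bounded : ∃ M : ℝ, ∀ u : ℂ, |u.re| ≤ 3 / 2 → ‖G u‖ ≤ M
  even : ∀ u : ℂ, |u.re| ≤ 3 / 2 → G (-u) = G u
  map_zero : G 0 = 1

/-- The integrand `y^{-u} γ(u) G(u) / u` at the point `u = 3/2 + it`. -/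
noncomputable def rankinSelbergVIntegrand (n : ℕ) (k l : Fin n → ℕ) (G : ℂ → ℂ) (y t : ℝ) : ℂ :=
  (y : ℂ) ^ (-((3 : ℂ) / 2 + t * Complex.I)) *
    (rankinSelbergGamma n k l ((3 : ℂ) / 2 + t * Complex.I) * G ((3 : ℂ) / 2 + t * Complex.I) /
      ((3 : ℂ) / 2 + t * Complex.I))

/-- The cut-off function `V(y) = (1/(2πi)) ∫_{Re u = 3/2} y^{-u} γ(u) G(u) du/u`, with the line
parametrized by `u = 3/2 + it`, `du = i dt`. -/
noncomputable def rankinSelbergV (n : ℕ) (k l : Fin n → ℕ) (G : ℂ → ℂ) (y : ℝ) : ℂ :=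
  (1 / (2 * Real.pi) : ℂ) * ∫ t : ℝ, rankinSelbergVIntegrand n k l G y t

open MeasureTheory Filter Topology

/-! ### Bounds for the Gamma function in vertical strips -/

theorem norm_Gamma_le_Gamma_re {s : ℂ} (hs : 0 < s.re) :
    ‖Complex.Gamma s‖ ≤ Real.Gamma s.re := by
  rw [Complex.Gamma_eq_integral hs, Real.Gamma_eq_integral hs, Complex.GammaIntegral]
  refine (norm_integral_le_integral_norm _).trans_eq ?_
  refine setIntegral_congr_fun measurableSet_Ioi fun x hx => ?_
  have hx : 0 < x := hx
  simp [Complex.norm_cpow_eq_rpow_re_of_pos hx, Complex.norm_exp]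

theorem norm_le_norm_add_natCast {s : ℂ} (hs : 0 < s.re) (N : ℕ) : ‖s‖ ≤ ‖s + N‖ := by
  rw [Complex.norm_def, Complex.norm_def]
  apply Real.sqrt_le_sqrt
  simp only [Complex.normSq_apply, Complex.add_re, Complex.natCast_re, Complex.add_im,
    Complex.natCast_im, add_zero]
  have : (0 : ℝ) ≤ N := N.cast_nonneg
  nlinarith [mul_nonneg this hs.le]

theorem norm_pow_mul_norm_Gamma_le {s : ℂ} (hs : 0 < s.re) (N : ℕ) :
    ‖s‖ ^ N * ‖Complex.Gamma s‖ ≤ Real.Gamma (s.re + N) := by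
  have key : ‖s‖ ^ N * ‖Complex.Gamma s‖ ≤ ‖Complex.Gamma (s + N)‖ := by
    induction N with
    | zero => simp
    | succ N ih =>
      have hne : s + N ≠ 0 := by
        intro h
        have := congrArg Complex.re h
        simp only [Complex.add_re, Complex.natCast_re, Complex.zero_re] at this
        have : (0 : ℝ) ≤ N := N.cast_nonneg
        linarith
      rw [Nat.cast_succ, ← add_assoc, Complex.Gamma_add_one _ hne, norm_mul, pow_succ', mul_assoc]
      exact mul_le_mul (norm_le_norm_add_natCast hs N) ih (by positivity) (norm_nonneg _)
  refine key.trans ?_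
  have h : (s + N).re = s.re + N := by simp
  rw [← h]
  exact norm_Gamma_le_Gamma_re (by rw [h]; positivity)

theorem Gamma_sub_le {x α : ℝ} (hα0 : 0 < α) (hα1 : α < 1) (hx : α < x) :
    Real.Gamma (x - α) ≤ Real.Gamma x * x ^ (-α) * (x / (x - α)) := by
  have hx0 : 0 < x := hα0.trans hx
  have hxα : 0 < x - α := sub_pos.2 hx
  have hΓ := Real.Gamma_pos_of_pos hx0
  have h := Real.Gamma_mul_add_mul_le_rpow_Gamma_mul_rpow_Gamma hx0 (by positivity : 0 < x + 1)
    hα0 (sub_pos.2 hα1) (add_sub_cancel α 1)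
  rw [show α * x + (1 - α) * (x + 1) = (x - α) + 1 by ring, Real.Gamma_add_one hxα.ne',
    Real.Gamma_add_one hx0.ne', Real.mul_rpow hx0.le hΓ.le, mul_left_comm,
    ← Real.rpow_add hΓ, add_sub_cancel, Real.rpow_one,
    show 1 - α = -α + 1 by ring, Real.rpow_add hx0, Real.rpow_one] at h
  rw [← mul_div_assoc, le_div_iff₀ hxα]
  linarith

theorem norm_Gamma_add_div_Gamma_le {x α : ℝ} (hα0 : 0 < α) (hα1 : α < 1 / 2) (hx : 1 / 2 ≤ x)
    {u : ℂ} (hu : u.re = -α) :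
    ‖Complex.Gamma (u + x) / Complex.Gamma x‖ ≤ (1 - 2 * α)⁻¹ * x ^ (-α) := by
  have hx0 : 0 < x := by linarith
  have hΓ := Real.Gamma_pos_of_pos hx0
  have hre : (u + x).re = x - α := by simp [hu, sub_eq_neg_add]
  rw [Complex.Gamma_ofReal, norm_div, Complex.norm_of_nonneg hΓ.le, div_le_iff₀ hΓ]
  have h1 := norm_Gamma_le_Gamma_re (s := u + x) (by rw [hre]; linarith)
  rw [hre] at h1
  refine h1.trans ((Gamma_sub_le hα0 (by linarith) (by linarith)).trans ?_)
  have h2 : x / (x - α) ≤ (1 - 2 * α)⁻¹ := by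
    rw [inv_eq_one_div, div_le_div_iff₀ (by linarith) (by linarith)]
    nlinarith
  have := mul_le_mul_of_nonneg_left h2 (by positivity : 0 ≤ Real.Gamma x * x ^ (-α))
  linarith

/-! ### Rapid decay in vertical strips -/

/-- `f` decays faster than any power of `1 + |u|` on the strip `σ₁ ≤ Re u ≤ σ₂`. -/
def RapidDecayOnStrip (σ₁ σ₂ : ℝ) (f : ℂ → ℂ) : Prop :=
  ∀ N : ℕ, ∃ C : ℝ, ∀ u : ℂ, σ₁ ≤ u.re → u.re ≤ σ₂ → (1 + ‖u‖) ^ N * ‖f u‖ ≤ C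

namespace RapidDecayOnStrip

variable {σ₁ σ₂ : ℝ} {f g : ℂ → ℂ}

theorem mul_of_growth (hf : RapidDecayOnStrip σ₁ σ₂ f) {A : ℝ} {m : ℕ}
    (hg : ∀ u : ℂ, σ₁ ≤ u.re → u.re ≤ σ₂ → ‖g u‖ ≤ A * (1 + ‖u‖) ^ m) :
    RapidDecayOnStrip σ₁ σ₂ (fun u => f u * g u) := by
  intro N
  obtain ⟨C, hC⟩ := hf (N + m)
  refine ⟨|A| * C, fun u h1 h2 => ?_⟩
  rw [norm_mul]
  have hg' : ‖g u‖ ≤ |A| * (1 + ‖u‖) ^ m :=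
    (hg u h1 h2).trans (mul_le_mul_of_nonneg_right (le_abs_self A) (by positivity))
  calc (1 + ‖u‖) ^ N * (‖f u‖ * ‖g u‖)
      ≤ (1 + ‖u‖) ^ N * (‖f u‖ * (|A| * (1 + ‖u‖) ^ m)) := by gcongr
    _ = |A| * ((1 + ‖u‖) ^ (N + m) * ‖f u‖) := by ring
    _ ≤ |A| * C := mul_le_mul_of_nonneg_left (hC u h1 h2) (abs_nonneg A)

theorem mul (hf : RapidDecayOnStrip σ₁ σ₂ f) (hg : RapidDecayOnStrip σ₁ σ₂ g) :
    RapidDecayOnStrip σ₁ σ₂ (f * g) := by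
  obtain ⟨C, hC⟩ := hg 0
  exact hf.mul_of_growth (A := C) (m := 0) fun u h1 h2 => by simpa using hC u h1 h2

theorem Gamma_add_ofReal {x : ℝ} (hx : 0 < σ₁ + x) :
    RapidDecayOnStrip σ₁ σ₂ (fun u => Complex.Gamma (u + x)) := by
  intro N
  have hcont : ContinuousOn (fun t : ℝ => Real.Gamma (t + N)) (Set.Icc (σ₁ + x) (σ₂ + x)) := by
    intro t ht
    have ht0 : 0 < t + N := add_pos_of_pos_of_nonneg (hx.trans_le ht.1) N.cast_nonneg
    have hd : DifferentiableAt ℝ Real.Gamma (t + N) :=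
      Real.differentiableAt_Gamma fun m hm => by
        have : (0 : ℝ) ≤ m := m.cast_nonneg
        linarith
    exact (hd.continuousAt.comp (f := fun t : ℝ => t + N) (by fun_prop)).continuousWithinAt
  obtain ⟨C, hC⟩ := isCompact_Icc.exists_bound_of_continuousOn hcont
  set K : ℝ := 1 + (1 + |x|) / (σ₁ + x)
  refine ⟨K ^ N * C, fun u h1 h2 => ?_⟩
  have hre : (u + x).re = u.re + x := by simp
  have hpos : 0 < (u + x).re := by rw [hre]; linarith
  have hle : σ₁ + x ≤ ‖u + x‖ := by
    refine le_trans ?_ ((le_abs_self _).trans (Complex.abs_re_le_norm _))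
    rw [hre]; linarith
  have hK : 1 + ‖u‖ ≤ K * ‖u + x‖ := by
    have h3 : ‖u‖ ≤ ‖u + x‖ + |x| := by
      have := norm_sub_le (u + x) (x : ℂ)
      rwa [add_sub_cancel_right, Complex.norm_real, Real.norm_eq_abs] at this
    have h4 : 1 + |x| ≤ (1 + |x|) / (σ₁ + x) * ‖u + x‖ := by
      rw [div_mul_eq_mul_div, le_div_iff₀ hx]
      exact mul_le_mul_of_nonneg_left hle (by positivity)
    simp only [K, add_mul, one_mul]
    linarith
  have hbd : Real.Gamma ((u + x).re + N) ≤ C :=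
    (le_abs_self _).trans (hC _ ⟨by rw [hre]; linarith, by rw [hre]; linarith⟩)
  calc (1 + ‖u‖) ^ N * ‖Complex.Gamma (u + x)‖
      ≤ (K * ‖u + x‖) ^ N * ‖Complex.Gamma (u + x)‖ := by gcongr
    _ = K ^ N * (‖u + x‖ ^ N * ‖Complex.Gamma (u + x)‖) := by ring
    _ ≤ K ^ N * C := by
      have hK0 : 0 ≤ K := by positivity
      exact mul_le_mul_of_nonneg_left ((norm_pow_mul_norm_Gamma_le hpos N).trans hbd)
        (by positivity)

theorem prod {ι : Type*} {s : Finset ι} (hs : s.Nonempty) {F : ι → ℂ → ℂ}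
    (hF : ∀ i ∈ s, RapidDecayOnStrip σ₁ σ₂ (F i)) :
    RapidDecayOnStrip σ₁ σ₂ (fun u => ∏ i ∈ s, F i u) := by
  have := Finset.prod_induction_nonempty F (RapidDecayOnStrip σ₁ σ₂) (fun _ _ => mul) hs hF
  rwa [show (fun u => ∏ i ∈ s, F i u) = ∏ i ∈ s, F i from
    funext fun u => (Finset.prod_apply u s F).symm]

/-- A continuous function of rapid decay is integrable along each vertical line of the strip. -/
theorem integrable_vertical (hf : RapidDecayOnStrip σ₁ σ₂ f) {c : ℝ} (h1 : σ₁ ≤ c) (h2 : c ≤ σ₂)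
    (hcont : Continuous fun t : ℝ => f (c + t * Complex.I)) :
    Integrable fun t : ℝ => f (c + t * Complex.I) := by
  obtain ⟨C, hC⟩ := hf 2
  refine (integrable_inv_one_add_sq.const_mul C).mono' hcont.aestronglyMeasurable
    (ae_of_all _ fun t => ?_)
  have h := hC (c + t * Complex.I) (by simpa using h1) (by simpa using h2)
  rw [← div_eq_mul_inv, le_div_iff₀ (by positivity), mul_comm]
  refine le_trans (mul_le_mul_of_nonneg_right ?_ (norm_nonneg _)) h
  have him : |t| ≤ ‖(c + t * Complex.I : ℂ)‖ := by
    simpa using Complex.abs_im_le_norm (c + t * Complex.I : ℂ)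
  nlinarith [sq_abs t, abs_nonneg t]

end RapidDecayOnStrip

/-! ### The archimedean factor -/

theorem rankinSelbergGamma_eq (n : ℕ) (k l : Fin n → ℕ) (u : ℂ) :
    rankinSelbergGamma n k l u = ∏ j : Fin n,
      (Complex.Gamma (u + ((1 + |(k j : ℝ) - l j|) / 2 : ℝ)) /
          Complex.Gamma ((1 + |(k j : ℝ) - l j|) / 2 : ℝ) *
        (Complex.Gamma (u + (((k j : ℝ) + l j - 1) / 2 : ℝ)) /
          Complex.Gamma (((k j : ℝ) + l j - 1) / 2 : ℝ))) := by
  refine Finset.prod_congr rfl fun j _ => ?_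
  have h1 : (((1 + |(k j : ℝ) - l j|) / 2 : ℝ) : ℂ) =
      1 / 2 + ((|(k j : ℤ) - (l j : ℤ)| : ℤ) : ℂ) / 2 := by
    rw [show ((|(k j : ℤ) - (l j : ℤ)| : ℤ) : ℂ) = ((|(k j : ℝ) - l j| : ℝ) : ℂ) by
      rw [← Complex.ofReal_intCast]; push_cast; rfl]
    push_cast
    ring_nf
  have h2 : ((((k j : ℝ) + l j - 1) / 2 : ℝ) : ℂ) = ((k j : ℂ) + l j) / 2 - 1 / 2 := by
    push_cast
    ring
  rw [div_mul_div_comm, h1, h2]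
  ring_nf

theorem quarter_div_mul_sq_le {k l : ℝ} (hk : 0 < k) (hl : 1 ≤ l) :
    k ^ 2 / (4 * l) ≤ (1 + |k - l|) / 2 * ((k + l - 1) / 2) := by
  have h1 : k / (2 * l) ≤ (1 + |k - l|) / 2 := by
    rw [div_le_div_iff₀ (by positivity) (by positivity)]
    rcases le_total k l with h | h
    · nlinarith [abs_nonneg (k - l), mul_nonneg (zero_le_one.trans hl) (abs_nonneg (k - l))]
    · rw [abs_of_nonneg (sub_nonneg.2 h)]
      nlinarith [mul_nonneg (sub_nonneg.2 h) (sub_nonneg.2 hl)]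
  calc k ^ 2 / (4 * l) = k / (2 * l) * (k / 2) := by field_simp; norm_num
    _ ≤ _ := mul_le_mul h1 (by linarith) (by positivity) (by positivity)

section weights

variable {n : ℕ} {k l : Fin n → ℕ}

theorem rankinSelbergGamma_zero (hk : ∀ j, 1 ≤ k j) (hl : ∀ j, 1 ≤ l j) :
    rankinSelbergGamma n k l 0 = 1 := by
  rw [rankinSelbergGamma_eq]
  refine Finset.prod_eq_one fun j _ => ?_
  have h1 : (1 : ℝ) ≤ k j := by exact_mod_cast hk j
  have h2 : (1 : ℝ) ≤ l j := by exact_mod_cast hl j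
  have hx : ∀ x : ℝ, 0 < x → Complex.Gamma x ≠ 0 := fun x hx => by
    rw [Complex.Gamma_ofReal]
    exact Complex.ofReal_ne_zero.2 (Real.Gamma_pos_of_pos hx).ne'
  rw [zero_add, zero_add, div_self (hx _ (by positivity)), div_self (hx _ (by linarith)), one_mul]

theorem differentiableAt_rankinSelbergGamma (hk : ∀ j, 1 ≤ k j) (hl : ∀ j, 1 ≤ l j) {u : ℂ}
    (hu : -(1 / 2) < u.re) : DifferentiableAt ℂ (rankinSelbergGamma n k l) u := by
  rw [show rankinSelbergGamma n k l = _ from funext (rankinSelbergGamma_eq n k l)]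
  have key : ∀ x : ℝ, 1 / 2 ≤ x →
      DifferentiableAt ℂ (fun u : ℂ => Complex.Gamma (u + x) / Complex.Gamma x) u := by
    intro x hx
    have hΓ : DifferentiableAt ℂ Complex.Gamma (u + x) :=
      Complex.differentiableAt_Gamma _ fun m hm => by
        have h := congrArg Complex.re hm
        simp only [Complex.add_re, Complex.ofReal_re, Complex.neg_re, Complex.natCast_re] at h
        have : (0 : ℝ) ≤ m := m.cast_nonneg
        linarith
    exact (hΓ.comp (f := fun u : ℂ => u + x) u (by fun_prop)).div_const _
  refine DifferentiableAt.fun_finsetProd fun j _ => ?_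
  have h1 : (1 : ℝ) ≤ k j := by exact_mod_cast hk j
  have h2 : (1 : ℝ) ≤ l j := by exact_mod_cast hl j
  exact (key _ (by linarith [abs_nonneg ((k j : ℝ) - l j)])).mul (key _ (by linarith))

theorem rapidDecayOnStrip_rankinSelbergGamma (hn : 1 ≤ n) (hk : ∀ j, 1 ≤ k j) (hl : ∀ j, 1 ≤ l j)
    {σ₁ σ₂ : ℝ} (hσ : -(1 / 2) < σ₁) : RapidDecayOnStrip σ₁ σ₂ (rankinSelbergGamma n k l) := by
  rw [show rankinSelbergGamma n k l = _ from funext (rankinSelbergGamma_eq n k l)]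
  have key : ∀ x : ℝ, 1 / 2 ≤ x →
      RapidDecayOnStrip σ₁ σ₂ (fun u : ℂ => Complex.Gamma (u + x) / Complex.Gamma x) := by
    intro x hx
    simp_rw [div_eq_mul_inv]
    exact (RapidDecayOnStrip.Gamma_add_ofReal (by linarith)).mul_of_growth
      (A := ‖(Complex.Gamma x)⁻¹‖) (m := 0) fun u _ _ => by simp
  refine RapidDecayOnStrip.prod ⟨⟨0, hn⟩, Finset.mem_univ _⟩ fun j _ => ?_
  have h1 : (1 : ℝ) ≤ k j := by exact_mod_cast hk j
  have h2 : (1 : ℝ) ≤ l j := by exact_mod_cast hl j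
  exact (key _ (by linarith [abs_nonneg ((k j : ℝ) - l j)])).mul (key _ (by linarith))

theorem norm_rankinSelbergGamma_le (hk : ∀ j, 1 ≤ k j) (hl : ∀ j, 1 ≤ l j) {α : ℝ} (hα0 : 0 < α)
    (hα1 : α < 1 / 2) {u : ℂ} (hu : u.re = -α) :
    ‖rankinSelbergGamma n k l u‖ ≤
      (∏ j, (1 - 2 * α)⁻¹ ^ 2 * (4 * l j : ℝ) ^ α) * (∏ j, (k j : ℝ) ^ 2) ^ (-α) := by
  rw [rankinSelbergGamma_eq, norm_prod, ← Real.finsetProd_rpow _ _ fun _ _ => by positivity,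
    ← Finset.prod_mul_distrib]
  refine Finset.prod_le_prod (fun _ _ => norm_nonneg _) fun j _ => ?_
  have h1 : (1 : ℝ) ≤ k j := by exact_mod_cast hk j
  have h2 : (1 : ℝ) ≤ l j := by exact_mod_cast hl j
  have hk0 : (0 : ℝ) < k j := by linarith
  have hl0 : (0 : ℝ) < l j := by linarith
  have hx1 : 1 / 2 ≤ (1 + |(k j : ℝ) - l j|) / 2 := by linarith [abs_nonneg ((k j : ℝ) - l j)]
  have hx2 : 1 / 2 ≤ ((k j : ℝ) + l j - 1) / 2 := by linarith
  have hc : 0 < 1 - 2 * α := by linarith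
  rw [norm_mul]
  refine (mul_le_mul (norm_Gamma_add_div_Gamma_le hα0 hα1 hx1 hu)
    (norm_Gamma_add_div_Gamma_le hα0 hα1 hx2 hu) (norm_nonneg _) (by positivity)).trans ?_
  have h3 : ((1 + |(k j : ℝ) - l j|) / 2) ^ (-α) * (((k j : ℝ) + l j - 1) / 2) ^ (-α) ≤
      (4 * l j : ℝ) ^ α * ((k j : ℝ) ^ 2) ^ (-α) := by
    rw [← Real.mul_rpow (by linarith) (by linarith)]
    refine (Real.rpow_le_rpow_of_nonpos (by positivity) (quarter_div_mul_sq_le hk0 h2)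
      (by linarith)).trans_eq ?_
    rw [Real.div_rpow (by positivity) (by positivity), Real.rpow_neg (x := 4 * (l j : ℝ))
      (by positivity), div_inv_eq_mul, mul_comm]
  have := mul_le_mul_of_nonneg_left h3 (by positivity : 0 ≤ (1 - 2 * α)⁻¹ ^ 2)
  linarith

end weights

/-! ### Shifting a contour past a simple pole at the origin -/

theorem add_mul_I_ne_zero {c : ℝ} (hc : c ≠ 0) (t : ℝ) : (c + t * Complex.I : ℂ) ≠ 0 := by
  intro h
  exact hc (by simpa using congrArg Complex.re h)

theorem continuous_inv_vertical {c : ℝ} (hc : c ≠ 0) :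
    Continuous fun t : ℝ => (c + t * Complex.I : ℂ)⁻¹ :=
  Continuous.inv₀ (by fun_prop) (add_mul_I_ne_zero hc)

/-- The symmetric integral of `1 / u` over a vertical segment. -/
theorem intervalIntegral_inv_vertical {c : ℝ} (hc : c ≠ 0) (T : ℝ) :
    ∫ t in (-T)..T, (c + t * Complex.I : ℂ)⁻¹ = (2 * Real.arctan (T / c) : ℝ) := by
  have hderiv : ∀ t ∈ Set.uIcc (-T) T,
      HasDerivAt (fun t : ℝ => ((Real.arctan (t / c) : ℝ) : ℂ) -
        Complex.I * ((Real.log (c ^ 2 + t ^ 2) / 2 : ℝ) : ℂ)) (c + t * Complex.I : ℂ)⁻¹ t := by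
    intro t _
    have hpos : 0 < c ^ 2 + t ^ 2 := by positivity
    have h1 : HasDerivAt (fun t : ℝ => Real.arctan (t / c)) (1 / (1 + (t / c) ^ 2) * (1 / c)) t :=
      ((hasDerivAt_id t).div_const c).arctan
    have h2 : HasDerivAt (fun t : ℝ => Real.log (c ^ 2 + t ^ 2) / 2)
        ((2 * t) / (c ^ 2 + t ^ 2) / 2) t := by
      have h3 : HasDerivAt (fun t : ℝ => c ^ 2 + t ^ 2) (2 * t) t := by
        simpa using (hasDerivAt_pow 2 t).const_add (c ^ 2)
      exact (h3.log hpos.ne').div_const 2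
    refine (h1.ofReal_comp.sub (h2.ofReal_comp.const_mul Complex.I)).congr_deriv ?_
    have e1 : 1 / (1 + (t / c) ^ 2) * (1 / c) = c / (c ^ 2 + t ^ 2) := by field_simp
    have hne : (c : ℂ) ^ 2 + (t : ℂ) ^ 2 ≠ 0 := by exact_mod_cast hpos.ne'
    rw [e1]
    refine eq_inv_of_mul_eq_one_left ?_
    push_cast
    field_simp
    linear_combination (-(t : ℂ) ^ 2) * Complex.I_sq
  rw [intervalIntegral.integral_eq_sub_of_hasDerivAt hderiv
    ((continuous_inv_vertical hc).intervalIntegrable _ _)]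
  simp only [neg_div, Real.arctan_neg, even_two, Even.neg_pow]
  push_cast
  ring

theorem tendsto_intervalIntegral_inv_vertical_of_pos {c : ℝ} (hc : 0 < c) :
    Tendsto (fun T : ℝ => ∫ t in (-T)..T, (c + t * Complex.I : ℂ)⁻¹) atTop (𝓝 (Real.pi : ℂ)) := by
  simp_rw [intervalIntegral_inv_vertical hc.ne']
  have h := ((Real.tendsto_arctan_atTop.mono_right nhdsWithin_le_nhds).comp
    (tendsto_id.atTop_div_const hc)).const_mul 2
  rw [mul_div_cancel₀ _ two_ne_zero] at h
  exact (Complex.continuous_ofReal.tendsto _).comp h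

theorem tendsto_intervalIntegral_inv_vertical_of_neg {c : ℝ} (hc : c < 0) :
    Tendsto (fun T : ℝ => ∫ t in (-T)..T, (c + t * Complex.I : ℂ)⁻¹) atTop
      (𝓝 (-Real.pi : ℂ)) := by
  have h := (tendsto_intervalIntegral_inv_vertical_of_pos (neg_pos.2 hc)).neg
  refine h.congr fun T => ?_
  rw [intervalIntegral_inv_vertical hc.ne, intervalIntegral_inv_vertical (neg_pos.2 hc).ne']
  simp [div_neg, Real.arctan_neg]

theorem tendsto_intervalIntegral_horizontal {σ₁ σ₂ : ℝ} (hσ : σ₁ ≤ σ₂) {g : ℂ → ℂ} {M : ℝ}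
    (hg : ∀ u : ℂ, σ₁ ≤ u.re → u.re ≤ σ₂ → u ≠ 0 → ‖g u‖ ≤ M / ‖u‖) {s : ℝ} (hs : |s| = 1) :
    Tendsto (fun T : ℝ => ∫ x in σ₁..σ₂, g (x + (s * T : ℝ) * Complex.I)) atTop (𝓝 0) := by
  have hlim : Tendsto (fun T : ℝ => |M| / T * |σ₂ - σ₁|) atTop (𝓝 0) := by
    simpa using (tendsto_const_nhds.div_atTop tendsto_id : Tendsto (fun T : ℝ => |M| / T)
      atTop (𝓝 0)).mul_const |σ₂ - σ₁|
  refine squeeze_zero_norm' ?_ hlim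
  filter_upwards [eventually_gt_atTop 0] with T hT
  refine intervalIntegral.norm_integral_le_of_norm_le_const fun x hx => ?_
  rw [Set.uIoc_of_le hσ] at hx
  have him : T ≤ ‖(x + (s * T : ℝ) * Complex.I : ℂ)‖ := by
    have := Complex.abs_im_le_norm (x + (s * T : ℝ) * Complex.I : ℂ)
    rw [show (x + (s * T : ℝ) * Complex.I : ℂ).im = s * T by simp, abs_mul, hs, one_mul,
      abs_of_pos hT] at this
    exact this
  have hre : (x + (s * T : ℝ) * Complex.I : ℂ).re = x := by simp
  refine (hg _ (by rw [hre]; exact hx.1.le) (by rw [hre]; exact hx.2)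
    (norm_pos_iff.1 (hT.trans_le him))).trans ?_
  exact div_le_div₀ (abs_nonneg M) (le_abs_self M) hT him

/-- Moving the line of integration of `h(u) / u` from `Re u = σ₂ > 0` to `Re u = σ₁ < 0` picks up
the residue `h(0)`. -/
theorem integral_vertical_sub_integral_vertical {σ₁ σ₂ : ℝ} (h₁ : σ₁ < 0) (h₂ : 0 < σ₂) {h : ℂ → ℂ}
    (hd : DifferentiableOn ℂ h {u | σ₁ ≤ u.re ∧ u.re ≤ σ₂}) {M : ℝ}
    (hM : ∀ u : ℂ, σ₁ ≤ u.re → u.re ≤ σ₂ → ‖h u‖ ≤ M)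
    (hi₁ : Integrable fun t : ℝ => h (σ₁ + t * Complex.I) / (σ₁ + t * Complex.I))
    (hi₂ : Integrable fun t : ℝ => h (σ₂ + t * Complex.I) / (σ₂ + t * Complex.I)) :
    (∫ t : ℝ, h (σ₂ + t * Complex.I) / (σ₂ + t * Complex.I)) -
      ∫ t : ℝ, h (σ₁ + t * Complex.I) / (σ₁ + t * Complex.I) = 2 * Real.pi * h 0 := by
  have hσ : σ₁ ≤ σ₂ := (h₁.trans h₂).le
  set S : Set ℂ := {u | σ₁ ≤ u.re ∧ u.re ≤ σ₂}
  have hS : S ∈ 𝓝 (0 : ℂ) := by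
    have h1 : ∀ᶠ u : ℂ in 𝓝 0, σ₁ < u.re :=
      Complex.continuous_re.continuousAt.eventually (lt_mem_nhds (by simpa using h₁))
    have h2 : ∀ᶠ u : ℂ in 𝓝 0, u.re < σ₂ :=
      Complex.continuous_re.continuousAt.eventually (gt_mem_nhds (by simpa using h₂))
    filter_upwards [h1, h2] with u hu1 hu2 using ⟨hu1.le, hu2.le⟩
  have hgd : DifferentiableOn ℂ (dslope h 0) S := (Complex.differentiableOn_dslope hS).2 hd
  have hg : ∀ u : ℂ, u ≠ 0 → dslope h 0 u = h u / u - h 0 * u⁻¹ := by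
    intro u hu
    rw [dslope_of_ne _ hu, slope_def_field]
    field_simp
    simp
  have hgM : ∀ u : ℂ, σ₁ ≤ u.re → u.re ≤ σ₂ → u ≠ 0 → ‖dslope h 0 u‖ ≤ (M + ‖h 0‖) / ‖u‖ := by
    intro u hu1 hu2 hu
    rw [hg u hu, ← div_eq_mul_inv, ← sub_div, norm_div]
    gcongr
    exact (norm_sub_le _ _).trans (by gcongr; exact hM u hu1 hu2)
  have hvert : ∀ {c : ℝ}, c ≠ 0 →
      (Integrable fun t : ℝ => h (c + t * Complex.I) / (c + t * Complex.I)) → ∀ {p : ℂ},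
      Tendsto (fun T : ℝ => ∫ t in (-T)..T, (c + t * Complex.I : ℂ)⁻¹) atTop (𝓝 p) →
      Tendsto (fun T : ℝ => ∫ t in (-T)..T, dslope h 0 (c + t * Complex.I)) atTop
        (𝓝 ((∫ t : ℝ, h (c + t * Complex.I) / (c + t * Complex.I)) - h 0 * p)) := by
    intro c hc hi p hp
    refine ((intervalIntegral_tendsto_integral hi tendsto_neg_atTop_atBot tendsto_id).sub
      (hp.const_mul (h 0))).congr fun T => ?_
    rw [← intervalIntegral.integral_const_mul, id, ← intervalIntegral.integral_sub
      hi.intervalIntegrable (((continuous_inv_vertical hc).const_mul _).intervalIntegrable _ _)]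
    exact intervalIntegral.integral_congr fun t _ => (hg _ (add_mul_I_ne_zero hc t)).symm
  have hv₁ := hvert h₁.ne hi₁ (tendsto_intervalIntegral_inv_vertical_of_neg h₁)
  have hv₂ := hvert h₂.ne' hi₂ (tendsto_intervalIntegral_inv_vertical_of_pos h₂)
  have hb := tendsto_intervalIntegral_horizontal hσ hgM (s := -1) (by simp)
  have ht := tendsto_intervalIntegral_horizontal hσ hgM (s := 1) (by simp)
  have hlim := ((hb.sub ht).add (hv₂.const_mul Complex.I)).sub (hv₁.const_mul Complex.I)
  have hzero : ∀ T : ℝ,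
      (∫ x in σ₁..σ₂, dslope h 0 (x + ((-1) * T : ℝ) * Complex.I)) -
        (∫ x in σ₁..σ₂, dslope h 0 (x + (1 * T : ℝ) * Complex.I)) +
        Complex.I * (∫ t in (-T)..T, dslope h 0 (σ₂ + t * Complex.I)) -
        Complex.I * (∫ t in (-T)..T, dslope h 0 (σ₁ + t * Complex.I)) = 0 := by
    intro T
    have := Complex.integral_boundary_rect_eq_zero_of_differentiableOn (dslope h 0)
      (⟨σ₁, -T⟩ : ℂ) (⟨σ₂, T⟩ : ℂ) (hgd.mono fun u hu => by
        have := hu.1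
        simp only [Set.mem_preimage, Set.uIcc_of_le hσ] at this
        exact this)
    simpa using this
  have h0 := tendsto_nhds_unique hlim (tendsto_const_nhds.congr fun T => (hzero T).symm)
  have hI := mul_left_cancel₀ Complex.I_ne_zero
    (show Complex.I * ((∫ t : ℝ, h (σ₂ + t * Complex.I) / (σ₂ + t * Complex.I)) -
      (∫ t : ℝ, h (σ₁ + t * Complex.I) / (σ₁ + t * Complex.I)) - 2 * Real.pi * h 0) =
      Complex.I * 0 by linear_combination h0)
  exact sub_eq_zero.1 hI

/-! ### Smoothness of inverse Mellin integrals -/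

theorem iteratedDeriv_eq_of_hasDerivAt {E : Type*} [NormedAddCommGroup E] [NormedSpace ℝ E]
    {s : Set ℝ} (hs : IsOpen s) {f : ℕ → ℝ → E}
    (hf : ∀ m, ∀ y ∈ s, HasDerivAt (f m) (f (m + 1) y) y) (m : ℕ) :
    ∀ y ∈ s, iteratedDeriv m (f 0) y = f m y := by
  induction m with
  | zero => simp
  | succ m ih =>
    intro y hy
    rw [iteratedDeriv_succ, Filter.EventuallyEq.deriv_eq (f := f m)
      (by filter_upwards [hs.mem_nhds hy] with z hz using ih z hz)]
    exact (hf m y hy).deriv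

theorem contDiffOn_of_hasDerivAt {E : Type*} [NormedAddCommGroup E] [NormedSpace ℝ E]
    {s : Set ℝ} (hs : IsOpen s) {f : ℕ → ℝ → E}
    (hf : ∀ m, ∀ y ∈ s, HasDerivAt (f m) (f (m + 1) y) y) :
    ContDiffOn ℝ ((⊤ : ℕ∞) : WithTop ℕ∞) (f 0) s := by
  refine contDiffOn_of_differentiableOn_deriv fun m _ y hy => ?_
  refine DifferentiableWithinAt.congr (hf m y hy).differentiableAt.differentiableWithinAt
    (fun z hz => ?_) ?_
  · rw [iteratedDerivWithin_of_isOpen hs hz, iteratedDeriv_eq_of_hasDerivAt hs hf m z hz]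
  · rw [iteratedDerivWithin_of_isOpen hs hy, iteratedDeriv_eq_of_hasDerivAt hs hf m y hy]

theorem continuous_ofReal_cpow_vertical {y : ℝ} (hy : 0 < y) {w : ℝ → ℂ} (hw : Continuous w) :
    Continuous fun t : ℝ => (y : ℂ) ^ w t :=
  hw.const_cpow (Or.inl (by exact_mod_cast hy.ne'))

/-- `∏_{i < m} (-(u + i))`, the polynomial with `y ^ m * (d/dy) ^ m y ^ (-u) = p_m(u) * y ^ (-u)`. -/
noncomputable def negAscPochhammer (m : ℕ) (u : ℂ) : ℂ := ∏ i ∈ Finset.range m, (-(u + i))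

theorem negAscPochhammer_succ (m : ℕ) (u : ℂ) :
    negAscPochhammer (m + 1) u = negAscPochhammer m u * (-(u + m)) :=
  Finset.prod_range_succ _ _

theorem negAscPochhammer_apply_zero (m : ℕ) :
    negAscPochhammer m 0 = if m = 0 then 1 else 0 := by
  cases m with
  | zero => simp [negAscPochhammer]
  | succ m => simp [negAscPochhammer, Finset.prod_range_succ']

theorem differentiable_negAscPochhammer (m : ℕ) : Differentiable ℂ (negAscPochhammer m) := by
  unfold negAscPochhammer
  fun_prop

theorem norm_negAscPochhammer_le (m : ℕ) (u : ℂ) :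
    ‖negAscPochhammer m u‖ ≤ (∏ i ∈ Finset.range m, ((i : ℝ) + 1)) * (1 + ‖u‖) ^ m := by
  rw [negAscPochhammer, norm_prod]
  have : (1 + ‖u‖) ^ m = ∏ i ∈ Finset.range m, (1 + ‖u‖) := by simp
  rw [this, ← Finset.prod_mul_distrib]
  refine Finset.prod_le_prod (fun _ _ => norm_nonneg _) fun i _ => ?_
  have h := norm_add_le u (i : ℂ)
  rw [Complex.norm_natCast] at h
  rw [norm_neg]
  have : (0 : ℝ) ≤ i := i.cast_nonneg
  nlinarith [norm_nonneg u, mul_nonneg this (norm_nonneg u)]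

/-- Differentiation under the integral sign in `∫ y ^ (-(u + m)) p_m(u) H(t) dt`, `u = c + it`. -/
theorem hasDerivAt_integral_cpow_vertical {c : ℝ} (hc : 0 < c) {H : ℝ → ℂ} (hH : Continuous H)
    (hint : ∀ m, Integrable fun t : ℝ => negAscPochhammer m (c + t * Complex.I) * H t)
    (m : ℕ) {y : ℝ} (hy : 0 < y) :
    HasDerivAt (fun y : ℝ => ∫ t : ℝ, (y : ℂ) ^ (-((c + t * Complex.I : ℂ) + m)) *
        (negAscPochhammer m (c + t * Complex.I) * H t))
      (∫ t : ℝ, (y : ℂ) ^ (-((c + t * Complex.I : ℂ) + (m + 1 : ℕ))) *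
        (negAscPochhammer (m + 1) (c + t * Complex.I) * H t)) y := by
  have hp : ∀ m, Continuous fun t : ℝ => negAscPochhammer m (c + t * Complex.I) := fun m =>
    (differentiable_negAscPochhammer m).continuous.comp (by fun_prop)
  have hcont : ∀ (m : ℕ) {z : ℝ}, 0 < z → Continuous fun t : ℝ =>
      (z : ℂ) ^ (-((c + t * Complex.I : ℂ) + m)) *
        (negAscPochhammer m (c + t * Complex.I) * H t) := fun m z hz =>
    (continuous_ofReal_cpow_vertical hz (by fun_prop)).mul ((hp m).mul hH)
  have hnorm : ∀ (m : ℕ) {z : ℝ}, 0 < z → ∀ t : ℝ,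
      ‖(z : ℂ) ^ (-((c + t * Complex.I : ℂ) + m))‖ = z ^ (-(c + m)) := by
    intro m z hz t
    rw [Complex.norm_cpow_eq_rpow_re_of_pos hz]
    simp
  have hball : ∀ z ∈ Metric.ball y (y / 2), y / 2 < z := by
    intro z hz
    rw [Metric.mem_ball, Real.dist_eq, abs_lt] at hz
    linarith [hz.1]
  refine (hasDerivAt_integral_of_dominated_loc_of_deriv_le
    (Metric.ball_mem_nhds y (half_pos hy)) ?_ ?_
    (F' := fun (y t : ℝ) => (y : ℂ) ^ (-((c + t * Complex.I : ℂ) + (m + 1 : ℕ))) *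
      (negAscPochhammer (m + 1) (c + t * Complex.I) * H t))
    (hcont (m + 1) hy).aestronglyMeasurable
    (bound := fun t : ℝ => (y / 2) ^ (-(c + (m + 1 : ℕ))) *
      ‖negAscPochhammer (m + 1) (c + t * Complex.I) * H t‖)
    (ae_of_all _ fun t z hz => ?_) ((hint (m + 1)).norm.const_mul _)
    (ae_of_all _ fun t z hz => ?_)).2
  · filter_upwards [lt_mem_nhds hy] with z hz using (hcont m hz).aestronglyMeasurable
  · refine ((hint m).norm.const_mul (y ^ (-(c + m)))).mono' (hcont m hy).aestronglyMeasurable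
      (ae_of_all _ fun t => ?_)
    rw [norm_mul, hnorm m hy]
  · have hz0 := hball z hz
    rw [norm_mul, hnorm (m + 1) ((half_pos hy).trans hz0)]
    refine mul_le_mul_of_nonneg_right ?_ (norm_nonneg _)
    exact Real.rpow_le_rpow_of_nonpos (half_pos hy) hz0.le (by
      have : (0 : ℝ) ≤ (m + 1 : ℕ) := Nat.cast_nonneg _
      linarith)
  · have hz0 : 0 < z := (half_pos hy).trans (hball z hz)
    have hne : -((c + t * Complex.I : ℂ) + m) ≠ 0 := by
      intro h
      have h := congrArg Complex.re h
      simp only [Complex.neg_re, Complex.add_re, Complex.ofReal_re, Complex.mul_re, Complex.I_re,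
        mul_zero, Complex.ofReal_im, Complex.I_im, mul_one, sub_self, add_zero,
        Complex.natCast_re, Complex.zero_re] at h
      have : (0 : ℝ) ≤ m := m.cast_nonneg
      linarith
    have h1 : HasDerivAt (fun x : ℝ => (x : ℂ) ^ (-((c + t * Complex.I : ℂ) + m)))
        (-((c + t * Complex.I : ℂ) + m) * (z : ℂ) ^ (-((c + t * Complex.I : ℂ) + m) - 1)) z :=
      hasDerivAt_ofReal_cpow_const hz0.ne' hne
    refine (h1.mul_const (negAscPochhammer m (c + t * Complex.I) * H t)).congr_deriv ?_
    rw [negAscPochhammer_succ, show -((c + t * Complex.I : ℂ) + (m + 1 : ℕ)) =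
      -((c + t * Complex.I : ℂ) + m) - 1 by push_cast; ring]
    ring

theorem continuous_vertical {σ₁ σ₂ : ℝ} {F : ℂ → ℂ}
    (hF : ContinuousOn F {u | σ₁ ≤ u.re ∧ u.re ≤ σ₂}) {c : ℝ} (h1 : σ₁ ≤ c) (h2 : c ≤ σ₂) :
    Continuous fun t : ℝ => F (c + t * Complex.I) :=
  hF.comp_continuous (by fun_prop) fun t => by simpa using And.intro h1 h2

theorem rpow_le_rpow_add_rpow {y p q r : ℝ} (hy : 0 < y) (h1 : p ≤ q) (h2 : q ≤ r) :
    y ^ q ≤ y ^ p + y ^ r := by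
  have hp : 0 < y ^ p := by positivity
  have hr : 0 < y ^ r := by positivity
  rcases le_total y 1 with h | h
  · linarith [Real.rpow_le_rpow_of_exponent_ge hy h h1]
  · linarith [Real.rpow_le_rpow_of_exponent_le h h2]

/-! ### Inverse Mellin integrals of rapidly decaying functions with a simple pole -/

section inverseMellin

variable {σ₁ σ₂ : ℝ} {F : ℂ → ℂ}

theorem RapidDecayOnStrip.negAscPochhammer_mul (hF : RapidDecayOnStrip σ₁ σ₂ F) (m : ℕ) :
    RapidDecayOnStrip σ₁ σ₂ (fun u => negAscPochhammer m u * F u) := by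
  simp_rw [mul_comm (negAscPochhammer m _)]
  exact hF.mul_of_growth fun u _ _ => norm_negAscPochhammer_le m u

theorem integrable_negAscPochhammer_mul_div (hF : RapidDecayOnStrip σ₁ σ₂ F)
    (hd : ContinuousOn F {u | σ₁ ≤ u.re ∧ u.re ≤ σ₂}) {c : ℝ} (h1 : σ₁ ≤ c) (h2 : c ≤ σ₂)
    (hc : c ≠ 0) (m : ℕ) :
    Integrable fun t : ℝ => negAscPochhammer m (c + t * Complex.I) *
      (F (c + t * Complex.I) / (c + t * Complex.I)) := by
  have hp : Continuous fun t : ℝ =>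
      negAscPochhammer m (c + t * Complex.I) * F (c + t * Complex.I) :=
    ((differentiable_negAscPochhammer m).continuous.comp (by fun_prop)).mul
      (continuous_vertical hd h1 h2)
  have hint := (hF.negAscPochhammer_mul m).integrable_vertical h1 h2 hp
  simp_rw [div_eq_mul_inv, ← mul_assoc]
  refine (hint.norm.mul_const |c|⁻¹).mono'
    (hp.mul (continuous_inv_vertical hc)).aestronglyMeasurable (ae_of_all _ fun t => ?_)
  rw [norm_mul, norm_inv]
  have hre : |c| ≤ ‖(c + t * Complex.I : ℂ)‖ := by
    simpa using Complex.abs_re_le_norm (c + t * Complex.I : ℂ)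
  gcongr

theorem integrable_cpow_mul {H : ℝ → ℂ} (hH : Integrable H) {y : ℝ} (hy : 0 < y) (c : ℝ) :
    Integrable fun t : ℝ => (y : ℂ) ^ (-(c + t * Complex.I : ℂ)) * H t := by
  refine (hH.norm.const_mul (y ^ (-c))).mono'
    ((continuous_ofReal_cpow_vertical hy (by fun_prop)).aestronglyMeasurable.mul
      hH.aestronglyMeasurable) (ae_of_all _ fun t => ?_)
  rw [norm_mul, Complex.norm_cpow_eq_rpow_re_of_pos hy]
  simp

variable (F) in
/-- The integrals `∫ y ^ (-(u + m)) p_m(u) F(u) / u dt` along `u = c + it`; these are the successive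
derivatives in `y` of the one with `m = 0`. -/
noncomputable def verticalIntegral (c : ℝ) (m : ℕ) (y : ℝ) : ℂ :=
  ∫ t : ℝ, (y : ℂ) ^ (-((c + t * Complex.I : ℂ) + m)) *
    (negAscPochhammer m (c + t * Complex.I) * (F (c + t * Complex.I) / (c + t * Complex.I)))

theorem hasDerivAt_verticalIntegral (hF : RapidDecayOnStrip σ₁ σ₂ F)
    (hd : ContinuousOn F {u | σ₁ ≤ u.re ∧ u.re ≤ σ₂}) {c : ℝ} (h1 : σ₁ ≤ c) (h2 : c ≤ σ₂)
    (hc : 0 < c) (m : ℕ) {y : ℝ} (hy : 0 < y) :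
    HasDerivAt (verticalIntegral F c m) (verticalIntegral F c (m + 1) y) y := by
  have hcont : Continuous fun t : ℝ => F (c + t * Complex.I) / (c + t * Complex.I) := by
    simp_rw [div_eq_mul_inv]
    exact (continuous_vertical hd h1 h2).mul (continuous_inv_vertical hc.ne')
  exact hasDerivAt_integral_cpow_vertical hc hcont
    (integrable_negAscPochhammer_mul_div hF hd h1 h2 hc.ne') m hy

theorem pow_mul_verticalIntegral (c : ℝ) (m : ℕ) {y : ℝ} (hy : 0 < y) :
    (y : ℂ) ^ m * verticalIntegral F c m y = ∫ t : ℝ, (y : ℂ) ^ (-(c + t * Complex.I : ℂ)) *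
      (negAscPochhammer m (c + t * Complex.I) *
        (F (c + t * Complex.I) / (c + t * Complex.I))) := by
  have hy' : (y : ℂ) ≠ 0 := by exact_mod_cast hy.ne'
  rw [verticalIntegral, ← integral_const_mul]
  refine integral_congr_ae (ae_of_all _ fun t => ?_)
  simp only
  rw [← mul_assoc, ← Complex.cpow_natCast, ← Complex.cpow_add _ _ hy']
  congr 2
  ring

/-- Moving the line of integration past the pole at `0`. -/
theorem pow_mul_verticalIntegral_sub (hF : RapidDecayOnStrip σ₁ σ₂ F)
    (hd : DifferentiableOn ℂ F {u | σ₁ ≤ u.re ∧ u.re ≤ σ₂}) (h₁ : σ₁ < 0) (h₂ : 0 < σ₂)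
    (m : ℕ) {y : ℝ} (hy : 0 < y) :
    (y : ℂ) ^ m * verticalIntegral F σ₂ m y - (y : ℂ) ^ m * verticalIntegral F σ₁ m y =
      2 * Real.pi * (if m = 0 then F 0 else 0) := by
  have hσ : σ₁ ≤ σ₂ := (h₁.trans h₂).le
  have hy' : (y : ℂ) ≠ 0 := by exact_mod_cast hy.ne'
  set h : ℂ → ℂ := fun u => (y : ℂ) ^ (-u) * (negAscPochhammer m u * F u) with hh
  have hdiff : DifferentiableOn ℂ h {u | σ₁ ≤ u.re ∧ u.re ≤ σ₂} :=
    (differentiable_neg.const_cpow (Or.inl hy')).differentiableOn.mul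
      ((differentiable_negAscPochhammer m).differentiableOn.mul hd)
  obtain ⟨C, hC⟩ := hF.negAscPochhammer_mul m 0
  have hbound : ∀ u : ℂ, σ₁ ≤ u.re → u.re ≤ σ₂ → ‖h u‖ ≤ (y ^ (-σ₂) + y ^ (-σ₁)) * C := by
    intro u hu1 hu2
    have h1 := hC u hu1 hu2
    rw [pow_zero, one_mul] at h1
    rw [hh, norm_mul, Complex.norm_cpow_eq_rpow_re_of_pos hy, Complex.neg_re]
    exact mul_le_mul (rpow_le_rpow_add_rpow hy (by linarith) (by linarith)) h1 (norm_nonneg _)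
      (by positivity)
  have heq : ∀ c t : ℝ, h (c + t * Complex.I) / (c + t * Complex.I) =
      (y : ℂ) ^ (-(c + t * Complex.I : ℂ)) * (negAscPochhammer m (c + t * Complex.I) *
        (F (c + t * Complex.I) / (c + t * Complex.I))) := fun c t => by
    simp only [hh]
    ring
  have key := integral_vertical_sub_integral_vertical h₁ h₂ hdiff hbound
    (by
      simp_rw [heq]
      exact integrable_cpow_mul
        (integrable_negAscPochhammer_mul_div hF hd.continuousOn le_rfl hσ h₁.ne m) hy σ₁)
    (by
      simp_rw [heq]
      exact integrable_cpow_mul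
        (integrable_negAscPochhammer_mul_div hF hd.continuousOn hσ le_rfl h₂.ne' m) hy σ₂)
  simp_rw [heq] at key
  rw [pow_mul_verticalIntegral _ _ hy, pow_mul_verticalIntegral _ _ hy, key]
  simp only [hh, neg_zero, Complex.cpow_zero, one_mul, negAscPochhammer_apply_zero, ite_mul,
    zero_mul]

theorem norm_pow_mul_verticalIntegral_le (c : ℝ) (m : ℕ) {y : ℝ} (hy : 0 < y) :
    ‖(y : ℂ) ^ m * verticalIntegral F c m y‖ ≤ y ^ (-c) *
      ∫ t : ℝ, ‖negAscPochhammer m (c + t * Complex.I) *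
        (F (c + t * Complex.I) / (c + t * Complex.I))‖ := by
  rw [pow_mul_verticalIntegral _ _ hy, ← integral_const_mul]
  refine (norm_integral_le_integral_norm _).trans_eq (integral_congr_ae (ae_of_all _ fun t => ?_))
  simp only
  rw [norm_mul, Complex.norm_cpow_eq_rpow_re_of_pos hy]
  simp

end inverseMellin

/-! ### The cut-off function -/

section cutoff

variable {n : ℕ} {k l : Fin n → ℕ} {G : ℂ → ℂ}

theorem differentiableOn_rankinSelbergGamma_mul (hk : ∀ j, 1 ≤ k j) (hl : ∀ j, 1 ≤ l j)
    (hG : IsAdmissibleTestFunction G) {α : ℝ} (hα1 : α < 1 / 2) :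
    DifferentiableOn ℂ (fun u => rankinSelbergGamma n k l u * G u)
      {u | -α ≤ u.re ∧ u.re ≤ 3 / 2} := by
  obtain ⟨U, -, hU, hd⟩ := hG.holomorphic
  intro u hu
  refine (differentiableAt_rankinSelbergGamma hk hl
    (by linarith [hu.1])).differentiableWithinAt.mul ?_
  refine (hd.mono fun v hv => hU ?_) u hu
  exact abs_le.2 ⟨by linarith [hv.1], hv.2⟩

theorem rapidDecayOnStrip_rankinSelbergGamma_mul (hn : 1 ≤ n) (hk : ∀ j, 1 ≤ k j)
    (hl : ∀ j, 1 ≤ l j) (hG : IsAdmissibleTestFunction G) {α : ℝ} (hα1 : α < 1 / 2) :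
    RapidDecayOnStrip (-α) (3 / 2) (fun u => rankinSelbergGamma n k l u * G u) := by
  obtain ⟨M, hM⟩ := hG.bounded
  refine (rapidDecayOnStrip_rankinSelbergGamma hn hk hl (by linarith)).mul_of_growth
    (A := M) (m := 0) fun u h1 h2 => ?_
  simpa using hM u (abs_le.2 ⟨by linarith, h2⟩)

theorem rankinSelbergVIntegrand_eq (y t : ℝ) :
    rankinSelbergVIntegrand n k l G y t = (y : ℂ) ^ (-(((3 / 2 : ℝ) : ℂ) + t * Complex.I)) *
      (negAscPochhammer 0 (((3 / 2 : ℝ) : ℂ) + t * Complex.I) *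
        (rankinSelbergGamma n k l (((3 / 2 : ℝ) : ℂ) + t * Complex.I) *
          G (((3 / 2 : ℝ) : ℂ) + t * Complex.I) / (((3 / 2 : ℝ) : ℂ) + t * Complex.I))) := by
  simp [rankinSelbergVIntegrand, negAscPochhammer]

theorem rankinSelbergV_eq : rankinSelbergV n k l G = fun y => (1 / (2 * Real.pi) : ℂ) *
    verticalIntegral (fun u => rankinSelbergGamma n k l u * G u) (3 / 2) 0 y := by
  funext y
  simp only [rankinSelbergV, rankinSelbergVIntegrand_eq, verticalIntegral, Nat.cast_zero, add_zero]

theorem integrable_rankinSelbergVIntegrand (hn : 1 ≤ n) (hk : ∀ j, 1 ≤ k j) (hl : ∀ j, 1 ≤ l j)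
    (hG : IsAdmissibleTestFunction G) {y : ℝ} (hy : 0 < y) :
    Integrable (rankinSelbergVIntegrand n k l G y) := by
  rw [show rankinSelbergVIntegrand n k l G y = _ from funext fun t => rankinSelbergVIntegrand_eq y t]
  have hα : (0 : ℝ) < 1 / 2 := by norm_num
  exact integrable_cpow_mul (integrable_negAscPochhammer_mul_div
    (rapidDecayOnStrip_rankinSelbergGamma_mul hn hk hl hG hα)
    (differentiableOn_rankinSelbergGamma_mul hk hl hG hα).continuousOn (by norm_num) le_rfl
    (by norm_num) 0) hy _

theorem hasDerivAt_verticalIntegral_rankinSelberg (hn : 1 ≤ n) (hk : ∀ j, 1 ≤ k j)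
    (hl : ∀ j, 1 ≤ l j) (hG : IsAdmissibleTestFunction G) (m : ℕ) {y : ℝ} (hy : 0 < y) :
    HasDerivAt (fun y => (1 / (2 * Real.pi) : ℂ) *
        verticalIntegral (fun u => rankinSelbergGamma n k l u * G u) (3 / 2) m y)
      ((1 / (2 * Real.pi) : ℂ) *
        verticalIntegral (fun u => rankinSelbergGamma n k l u * G u) (3 / 2) (m + 1) y) y := by
  have hα : (0 : ℝ) < 1 / 2 := by norm_num
  exact (hasDerivAt_verticalIntegral (rapidDecayOnStrip_rankinSelbergGamma_mul hn hk hl hG hα)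
    (differentiableOn_rankinSelbergGamma_mul hk hl hG hα).continuousOn (by norm_num) le_rfl
    (by norm_num) m hy).const_mul _

theorem contDiffOn_rankinSelbergV (hn : 1 ≤ n) (hk : ∀ j, 1 ≤ k j) (hl : ∀ j, 1 ≤ l j)
    (hG : IsAdmissibleTestFunction G) :
    ContDiffOn ℝ ((⊤ : ℕ∞) : WithTop ℕ∞) (rankinSelbergV n k l G) (Set.Ioi 0) := by
  rw [rankinSelbergV_eq]
  exact contDiffOn_of_hasDerivAt isOpen_Ioi (f := fun m y => (1 / (2 * Real.pi) : ℂ) *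
    verticalIntegral (fun u => rankinSelbergGamma n k l u * G u) (3 / 2) m y)
    fun m _ hy => hasDerivAt_verticalIntegral_rankinSelberg hn hk hl hG m hy

theorem iteratedDeriv_rankinSelbergV (hn : 1 ≤ n) (hk : ∀ j, 1 ≤ k j) (hl : ∀ j, 1 ≤ l j)
    (hG : IsAdmissibleTestFunction G) (m : ℕ) {y : ℝ} (hy : 0 < y) :
    iteratedDeriv m (rankinSelbergV n k l G) y = (1 / (2 * Real.pi) : ℂ) *
      verticalIntegral (fun u => rankinSelbergGamma n k l u * G u) (3 / 2) m y := by
  rw [rankinSelbergV_eq]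
  exact iteratedDeriv_eq_of_hasDerivAt isOpen_Ioi (f := fun m y => (1 / (2 * Real.pi) : ℂ) *
    verticalIntegral (fun u => rankinSelbergGamma n k l u * G u) (3 / 2) m y)
    (fun m _ hy => hasDerivAt_verticalIntegral_rankinSelberg hn hk hl hG m hy) m y hy

/-- The error term is bounded by the absolute integral over the line `Re u = -α`. -/
theorem norm_pow_mul_iteratedDeriv_rankinSelbergV_sub_le (hn : 1 ≤ n) (hk : ∀ j, 1 ≤ k j)
    (hl : ∀ j, 1 ≤ l j) (hG : IsAdmissibleTestFunction G) {α : ℝ} (hα0 : 0 < α)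
    (hα1 : α < 1 / 2) (m : ℕ) {y : ℝ} (hy : 0 < y) :
    ‖(y : ℂ) ^ m * iteratedDeriv m (rankinSelbergV n k l G) y - (if m = 0 then 1 else 0)‖ ≤
      y ^ α * ∫ t : ℝ, ‖negAscPochhammer m ((-α : ℝ) + t * Complex.I) *
        (rankinSelbergGamma n k l ((-α : ℝ) + t * Complex.I) * G ((-α : ℝ) + t * Complex.I) /
          ((-α : ℝ) + t * Complex.I))‖ := by
  set F : ℂ → ℂ := fun u => rankinSelbergGamma n k l u * G u with hF
  have hF0 : F 0 = 1 := by simp [hF, rankinSelbergGamma_zero hk hl, hG.map_zero]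
  have hpi : (Real.pi : ℂ) ≠ 0 := by exact_mod_cast Real.pi_ne_zero
  have hshift := pow_mul_verticalIntegral_sub
    (rapidDecayOnStrip_rankinSelbergGamma_mul hn hk hl hG hα1)
    (differentiableOn_rankinSelbergGamma_mul hk hl hG hα1) (by linarith) (by norm_num) m hy
  have heq : (y : ℂ) ^ m * iteratedDeriv m (rankinSelbergV n k l G) y - (if m = 0 then 1 else 0) =
      (1 / (2 * Real.pi) : ℂ) * ((y : ℂ) ^ m * verticalIntegral F (-α) m y) := by
    rw [iteratedDeriv_rankinSelbergV hn hk hl hG m hy, ← hF]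
    rw [← hF, show rankinSelbergGamma n k l 0 * G 0 = 1 from hF0] at hshift
    field_simp
    linear_combination hshift
  have hc : ‖(1 / (2 * Real.pi) : ℂ)‖ ≤ 1 := by
    rw [show (1 / (2 * Real.pi) : ℂ) = ((1 / (2 * Real.pi) : ℝ) : ℂ) by push_cast; rfl,
      Complex.norm_of_nonneg (by positivity), div_le_one (by positivity)]
    linarith [Real.pi_gt_three]
  rw [heq, norm_mul]
  refine (mul_le_of_le_one_left (norm_nonneg _) hc).trans ?_
  have := norm_pow_mul_verticalIntegral_le (F := F) (-α) m hy
  rwa [neg_neg] at this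

/-- A pointwise bound on the line `Re u = -α`, uniform in the weights `k`. -/
theorem norm_integrand_le_of_decay (hk : ∀ j, 1 ≤ k j) (hl : ∀ j, 1 ≤ l j) {α : ℝ} (hα0 : 0 < α)
    (hα1 : α < 1 / 2) {m : ℕ} {B : ℝ}
    (hB : ∀ u : ℂ, |u.re| ≤ 3 / 2 → (1 + ‖u‖) ^ (m + 1) * ‖G u‖ ≤ B) {u : ℂ} (hu : u.re = -α) :
    ‖negAscPochhammer m u * (rankinSelbergGamma n k l u * G u / u)‖ ≤
      ((∏ i ∈ Finset.range m, ((i : ℝ) + 1)) *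
        ((∏ j, (1 - 2 * α)⁻¹ ^ 2 * (4 * l j : ℝ) ^ α) * (∏ j, (k j : ℝ) ^ 2) ^ (-α)) *
        B * (1 + α⁻¹)) * (1 + u.im ^ 2)⁻¹ := by
  have hc : 0 < 1 - 2 * α := by linarith
  have hB' := hB u (by rw [hu, abs_neg, abs_of_pos hα0]; linarith)
  have hαu : α ≤ ‖u‖ := by
    have := Complex.abs_re_le_norm u
    rwa [hu, abs_neg, abs_of_pos hα0] at this
  have hu0 : 0 < ‖u‖ := hα0.trans_le hαu
  have hinv : ‖u‖⁻¹ ≤ (1 + α⁻¹) * (1 + ‖u‖)⁻¹ := by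
    rw [← div_eq_mul_inv, le_div_iff₀ (by positivity), mul_add, mul_one, inv_mul_cancel₀ hu0.ne',
      add_comm]
    gcongr
  have hsq : (1 + ‖u‖)⁻¹ * (1 + ‖u‖)⁻¹ ≤ (1 + u.im ^ 2)⁻¹ := by
    rw [← mul_inv]
    apply inv_anti₀ (by positivity)
    nlinarith [Complex.abs_im_le_norm u, sq_abs u.im, abs_nonneg u.im]
  have hG' : (1 + ‖u‖) ^ m * ‖G u‖ ≤ B * (1 + ‖u‖)⁻¹ := by
    rw [← div_eq_mul_inv, le_div_iff₀ (by positivity)]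
    calc (1 + ‖u‖) ^ m * ‖G u‖ * (1 + ‖u‖) = (1 + ‖u‖) ^ (m + 1) * ‖G u‖ := by ring
      _ ≤ B := hB'
  have hB0 : 0 ≤ B := le_trans (by positivity) hB'
  set A : ℝ := ∏ i ∈ Finset.range m, ((i : ℝ) + 1)
  set D : ℝ := (∏ j, (1 - 2 * α)⁻¹ ^ 2 * (4 * l j : ℝ) ^ α) * (∏ j, (k j : ℝ) ^ 2) ^ (-α)
  have hA : 0 ≤ A := by positivity
  have hD : 0 ≤ D := by positivity
  rw [norm_mul, norm_div, norm_mul, div_eq_mul_inv]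
  calc ‖negAscPochhammer m u‖ * (‖rankinSelbergGamma n k l u‖ * ‖G u‖ * ‖u‖⁻¹)
      ≤ (A * (1 + ‖u‖) ^ m) * (D * ‖G u‖ * ((1 + α⁻¹) * (1 + ‖u‖)⁻¹)) := by
        gcongr
        · exact norm_negAscPochhammer_le m u
        · exact norm_rankinSelbergGamma_le hk hl hα0 hα1 hu
    _ = A * D * (1 + α⁻¹) * (1 + ‖u‖)⁻¹ * ((1 + ‖u‖) ^ m * ‖G u‖) := by ring
    _ ≤ A * D * (1 + α⁻¹) * (1 + ‖u‖)⁻¹ * (B * (1 + ‖u‖)⁻¹) := by gcongr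
    _ = A * D * B * (1 + α⁻¹) * ((1 + ‖u‖)⁻¹ * (1 + ‖u‖)⁻¹) := by ring
    _ ≤ A * D * B * (1 + α⁻¹) * (1 + u.im ^ 2)⁻¹ := by gcongr

end cutoff

/-- Behaviour of the cut-off function near zero. The first part is for fixed weights `k`, `l` and an
arbitrary admissible `G`; the second gives a constant that is uniform in `k` as soon as
`G(u) = O((1+|u|)^{-a-1})` in the strip (for `G = 1` and `a ≥ 1` uniformity in `k` fails). -/
theorem rankinSelbergV_iteratedDeriv_near_zero
    (n : ℕ) (hn : 1 ≤ n) (l : Fin n → ℕ) (hl : ∀ j, Even (l j) ∧ 0 < l j)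
    (G : ℂ → ℂ) (hG : IsAdmissibleTestFunction G)
    (a : ℕ) (α : ℝ) (hα0 : 0 < α) (hα1 : α < 1 / 2) :
    (∀ k : Fin n → ℕ, (∀ j, Even (k j) ∧ 0 < k j) →
      (∀ y : ℝ, 0 < y → MeasureTheory.Integrable (rankinSelbergVIntegrand n k l G y)) ∧
      ContDiffOn ℝ ((⊤ : ℕ∞) : WithTop ℕ∞) (rankinSelbergV n k l G) (Set.Ioi 0) ∧
      ∃ C > (0 : ℝ), ∀ y : ℝ, 0 < y →
        ‖(y : ℂ) ^ a * iteratedDeriv a (rankinSelbergV n k l G) y -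
            (if a = 0 then 1 else 0)‖ ≤
          C * (y / ∏ j : Fin n, (k j : ℝ) ^ 2) ^ α) ∧
    ((∃ B : ℝ, ∀ u : ℂ, |u.re| ≤ 3 / 2 → (1 + ‖u‖) ^ (a + 1) * ‖G u‖ ≤ B) →
      ∃ C > (0 : ℝ), ∀ k : Fin n → ℕ, (∀ j, Even (k j) ∧ 0 < k j) →
        ∀ y : ℝ, 0 < y →
          ‖(y : ℂ) ^ a * iteratedDeriv a (rankinSelbergV n k l G) y -
              (if a = 0 then 1 else 0)‖ ≤
            C * (y / ∏ j : Fin n, (k j : ℝ) ^ 2) ^ α) := by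

  have hl1 : ∀ j, 1 ≤ l j := fun j => (hl j).2
  have hmain := fun (k : Fin n → ℕ) (hk : ∀ j, 1 ≤ k j) (y : ℝ) (hy : 0 < y) =>
    norm_pow_mul_iteratedDeriv_rankinSelbergV_sub_le hn hk hl1 hG hα0 hα1 a hy
  have hprod : ∀ k : Fin n → ℕ, (∀ j, 1 ≤ k j) → 0 < ∏ j : Fin n, (k j : ℝ) ^ 2 := fun k hk =>
    Finset.prod_pos fun j _ => pow_pos (Nat.cast_pos.2 (hk j)) 2
  refine ⟨fun k hk => ?_, ?_⟩
  · have hk1 : ∀ j, 1 ≤ k j := fun j => (hk j).2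
    refine ⟨fun y hy => integrable_rankinSelbergVIntegrand hn hk1 hl1 hG hy,
      contDiffOn_rankinSelbergV hn hk1 hl1 hG, ?_⟩
    set I : ℝ := ∫ t : ℝ, ‖negAscPochhammer a ((-α : ℝ) + t * Complex.I) *
        (rankinSelbergGamma n k l ((-α : ℝ) + t * Complex.I) * G ((-α : ℝ) + t * Complex.I) /
          ((-α : ℝ) + t * Complex.I))‖ with hI
    have hI0 : 0 ≤ I := MeasureTheory.integral_nonneg fun t => norm_nonneg _
    have hP := hprod k hk1
    refine ⟨(I + 1) * (∏ j : Fin n, (k j : ℝ) ^ 2) ^ α, by positivity, fun y hy => ?_⟩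
    refine (hmain k hk1 y hy).trans ?_
    rw [← hI, Real.div_rpow hy.le hP.le, mul_assoc,
      mul_div_cancel₀ _ (Real.rpow_pos_of_pos hP α).ne', mul_comm]
    exact mul_le_mul_of_nonneg_right (by linarith) (by positivity)
  · rintro ⟨B, hB⟩
    set A : ℝ := ∏ i ∈ Finset.range a, ((i : ℝ) + 1)
    set E : ℝ := ∏ j, (1 - 2 * α)⁻¹ ^ 2 * (4 * l j : ℝ) ^ α
    have hB0 : 0 ≤ B := le_trans (by positivity) (hB 0 (by norm_num))
    have hE : 0 ≤ E := by
      have hc : 0 < 1 - 2 * α := by linarith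
      positivity
    refine ⟨A * E * B * (1 + α⁻¹) * Real.pi + 1, by positivity, fun k hk y hy => ?_⟩
    have hk1 : ∀ j, 1 ≤ k j := fun j => (hk j).2
    have hP := hprod k hk1
    set P : ℝ := ∏ j : Fin n, (k j : ℝ) ^ 2
    have hint : ∫ t : ℝ, ‖negAscPochhammer a ((-α : ℝ) + t * Complex.I) *
        (rankinSelbergGamma n k l ((-α : ℝ) + t * Complex.I) * G ((-α : ℝ) + t * Complex.I) /
          ((-α : ℝ) + t * Complex.I))‖ ≤ A * (E * P ^ (-α)) * B * (1 + α⁻¹) * Real.pi := by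
      rw [← integral_univ_inv_one_add_sq, ← MeasureTheory.integral_const_mul]
      refine MeasureTheory.integral_mono_of_nonneg
        (MeasureTheory.ae_of_all _ fun t => norm_nonneg _)
        (integrable_inv_one_add_sq.const_mul _) (MeasureTheory.ae_of_all _ fun t => ?_)
      have h := norm_integrand_le_of_decay hk1 hl1 hα0 hα1 hB
        (u := ((-α : ℝ) : ℂ) + t * Complex.I) (by simp)
      rwa [show (((-α : ℝ) : ℂ) + t * Complex.I).im = t by simp] at h
    calc _ ≤ y ^ α * (A * (E * P ^ (-α)) * B * (1 + α⁻¹) * Real.pi) :=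
          (hmain k hk1 y hy).trans (by gcongr)
      _ = A * E * B * (1 + α⁻¹) * Real.pi * (y / P) ^ α := by
          rw [Real.div_rpow hy.le hP.le, Real.rpow_neg hP.le]
          ring
      _ ≤ _ := mul_le_mul_of_nonneg_right (by linarith) (by positivity)
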